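/- Let P be a Borel probability measure on ℝ^p with ∫‖x‖² P(dx) < ∞. Fix an integer k ≥ 1, constants M > 0, b > 0, λ ≥ 0, α₀ ∈ ℝ, and an even integer β ≥ 2. For p ∈ ℕ, an even integer β ≥ 2, λ ≥ 0, a weight vector W = (w_1,…,w_p) ∈ ℝ^p and a nonempty finite set A ⊆ ℝ^p, define g_{W,A} : ℝ^p → ℝ by g_{W,A}(x) = min_{a ∈ A} Σ_{l=1}^p (w_l^β + (λ/p²)|w_l|)(x_l − a_l)², and define Φ(W, A, P) = ∫ g_{W,A}(x) P(dx) − α₀ Σ_{l=1}^p w_l. Let ξ_k = {A ⊆ ℝ^p : A is nonempty, has at most k points, and A is contained in the closed ball of radius 5M centered at the origin} and Γ_k = [0,b]^p, and equip Γ_k × ξ_k with the metric d₀((W₁,A₁),(W₂,A₂)) = ‖W₁ − W₂‖² + H(A₁,A₂), where H is the Hausdorff distance. Then the map (W, A) ↦ Φ(W, A, P) is continuous on (Γ_k × ξ_k, d₀). -/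

import Mathlib

/-! The map `W ↦ (W l ^ β + (lam / p²) |W l|)_l` is continuous, so only the centres need a quantitative
estimate. For centres `a`, `a₀` in the ball of radius `R`, the two weighted quadratic forms at `x`
differ by at most `(∑ |v l - v₀ l| + C p ‖a - a₀‖) (1 + 2 ‖x‖² + 2 R²)`, where `C` bounds the
weights `v₀` (`wq_sub_le`). Hausdorff closeness lets every centre of one set be matched with a
centre of the other, so the minima obey the same bound (`inf'_sub_le`). The envelope
`1 + 2 ‖x‖² + 2 R²` is integrable because `P` has a finite second moment, and integrating the
pointwise bound gives the continuity. -/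

open MeasureTheory Filter

/-- The LW-k-means integrand
`g_{W,A}(x) = min_{a ∈ A} Σ_l (w_l^β + (λ/p²)|w_l|)(x_l − a_l)²`. -/
noncomputable def lwkG (p β : ℕ) (lam : ℝ)
    (W : EuclideanSpace ℝ (Fin p))
    (A : Finset (EuclideanSpace ℝ (Fin p))) (hA : A.Nonempty)
    (x : EuclideanSpace ℝ (Fin p)) : ℝ :=
  A.inf' hA fun a => ∑ l, (W l ^ β + (lam / (p : ℝ) ^ 2) * |W l|) * (x l - a l) ^ 2

/-- Perturbation of a weighted squared distance in the weights and in the centre, with an envelope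
that is uniform over centres in the ball of radius `R`. -/
lemma wq_sub_le {p : ℕ} (v v₀ : Fin p → ℝ) (C R r : ℝ)
    (hv₀ : ∀ l, 0 ≤ v₀ l) (hC : ∀ l, v₀ l ≤ C)
    (x a a₀ : EuclideanSpace ℝ (Fin p)) (ha : ‖a‖ ≤ R) (ha₀ : ‖a₀‖ ≤ R) (hr : dist a a₀ ≤ r) :
    |∑ l, v l * (x l - a l) ^ 2 - ∑ l, v₀ l * (x l - a₀ l) ^ 2|
      ≤ (∑ l, |v l - v₀ l| + C * p * r) * (1 + 2 * ‖x‖ ^ 2 + 2 * R ^ 2) := by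
  have hc : ∀ (y : EuclideanSpace ℝ (Fin p)) l, |y l| ≤ ‖y‖ := fun y l => by
    simpa using PiLp.norm_apply_le y l
  have hR : 0 ≤ R := (norm_nonneg a).trans ha
  set h := 1 + 2 * ‖x‖ ^ 2 + 2 * R ^ 2 with hh
  have h0 : 0 ≤ h := by positivity
  have key : ∀ l, |v l * (x l - a l) ^ 2 - v₀ l * (x l - a₀ l) ^ 2|
      ≤ |v l - v₀ l| * h + C * r * h := by
    intro l
    have hxa : |x l - a l| ≤ ‖x‖ + R :=
      (abs_sub _ _).trans (add_le_add (hc x l) ((hc a l).trans ha))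
    have hxa₀ : |x l - a₀ l| ≤ ‖x‖ + R :=
      (abs_sub _ _).trans (add_le_add (hc x l) ((hc a₀ l).trans ha₀))
    have hd : |a₀ l - a l| ≤ r := by
      rw [abs_sub_comm]
      exact (by simpa using hc (a - a₀) l : |a l - a₀ l| ≤ ‖a - a₀‖).trans
        (by rwa [← dist_eq_norm])
    have h1 : (x l - a l) ^ 2 ≤ h := by
      rw [← sq_abs]
      nlinarith [abs_nonneg (x l - a l), sq_nonneg (‖x‖ - R)]
    have h2 : |(x l - a l) + (x l - a₀ l)| ≤ h := by
      refine (abs_add_le _ _).trans ?_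
      nlinarith [sq_nonneg (‖x‖ - R), sq_nonneg (‖x‖ + R - 1)]
    have e : v l * (x l - a l) ^ 2 - v₀ l * (x l - a₀ l) ^ 2 =
        (v l - v₀ l) * (x l - a l) ^ 2
          + v₀ l * (a₀ l - a l) * ((x l - a l) + (x l - a₀ l)) := by ring
    rw [e]
    refine (abs_add_le _ _).trans ?_
    rw [abs_mul, abs_mul, abs_mul, abs_of_nonneg (hv₀ l), abs_of_nonneg (sq_nonneg (x l - a l))]
    have hr0 : 0 ≤ r := (abs_nonneg _).trans hd
    have hC0 : 0 ≤ C := (hv₀ l).trans (hC l)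
    have := hC l
    have := hv₀ l
    gcongr
  rw [← Finset.sum_sub_distrib]
  refine (Finset.abs_sum_le_sum_abs _ _).trans ((Finset.sum_le_sum fun l _ => key l).trans ?_)
  rw [Finset.sum_add_distrib, ← Finset.sum_mul]
  simp
  apply le_of_eq
  ring

/-- If every point of `B` has a partner in `A` whose value exceeds its own by at most `D`, the
minimum over `A` exceeds that over `B` by at most `D`. -/
lemma inf'_sub_le {α : Type*} (A B : Finset α) (hA : A.Nonempty) (hB : B.Nonempty) (f g : α → ℝ)
    (D : ℝ) (h : ∀ b ∈ B, ∃ a ∈ A, f a - g b ≤ D) : A.inf' hA f - B.inf' hB g ≤ D := by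
  obtain ⟨b, hb, e⟩ := Finset.exists_mem_eq_inf' hB g
  obtain ⟨a, ha, hD⟩ := h b hb
  have := Finset.inf'_le f ha
  rw [e]
  linarith

lemma lwkG_continuous (p β : ℕ) (lam : ℝ) (W : EuclideanSpace ℝ (Fin p))
    (A : Finset (EuclideanSpace ℝ (Fin p))) (hA : A.Nonempty) :
    Continuous (lwkG p β lam W A hA) := by
  unfold lwkG
  apply Continuous.finset_inf'_apply
  intro a _
  fun_prop

/-- The integrand is dominated by the weighted squared distance to any one centre, which `wq_sub_le`
with `v₀ = 0` bounds by an integrable envelope. -/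
lemma lwkG_integrable (p β : ℕ) (lam : ℝ) (hlam : 0 ≤ lam) (W : EuclideanSpace ℝ (Fin p))
    (hW : ∀ l, 0 ≤ W l) (A : Finset (EuclideanSpace ℝ (Fin p))) (hA : A.Nonempty)
    (P : Measure (EuclideanSpace ℝ (Fin p))) [IsProbabilityMeasure P]
    (hP2 : Integrable (fun x => ‖x‖ ^ 2) P) : Integrable (lwkG p β lam W A hA) P := by
  obtain ⟨a, ha⟩ := id hA
  have hw : ∀ l, 0 ≤ W l ^ β + (lam / (p : ℝ) ^ 2) * |W l| := fun l => by
    have := hW l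
    positivity
  have hI : Integrable (fun x : EuclideanSpace ℝ (Fin p) =>
      (∑ l, |(W l ^ β + (lam / (p : ℝ) ^ 2) * |W l|) - 0| + 0 * p * 0)
        * (1 + 2 * ‖x‖ ^ 2 + 2 * ‖a‖ ^ 2)) P :=
    ((((integrable_const 1).add (hP2.const_mul 2)).add (integrable_const _)).const_mul _)
  refine hI.mono' (lwkG_continuous p β lam W A hA).aestronglyMeasurable (.of_forall fun x => ?_)
  have hb := wq_sub_le (fun l => W l ^ β + (lam / (p : ℝ) ^ 2) * |W l|) (fun _ => 0) 0 ‖a‖ 0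
    (fun _ => le_rfl) (fun _ => le_rfl) x a a le_rfl le_rfl (dist_self a).le
  have h0 : 0 ≤ lwkG p β lam W A hA x :=
    Finset.le_inf' hA _ fun c _ => Finset.sum_nonneg fun l _ => mul_nonneg (hw l) (sq_nonneg _)
  rw [Real.norm_of_nonneg h0]
  refine (Finset.inf'_le _ ha).trans ((le_abs_self _).trans ?_)
  simpa only [zero_mul, Finset.sum_const_zero, sub_zero] using hb

/-- Continuity of the population LW-k-means objective
`Φ(W, A, P) = ∫ g_{W,A} dP − α₀ Σ_l w_l` on `Γ_k × ξ_k` with respect to the metric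
`d₀((W₁,A₁),(W₂,A₂)) = ‖W₁ − W₂‖² + H(A₁,A₂)`, stated in ε–δ form. -/
theorem lwkmeans_objective_continuous
    (p : ℕ) (hp : 0 < p)
    (k : ℕ) (hk : 1 ≤ k) (M b lam : ℝ) (hM : 0 < M) (hb : 0 < b) (hlam : 0 ≤ lam)
    (α₀ : ℝ)
    (β : ℕ) (hβ2 : 2 ≤ β) (hβeven : Even β)
    (P : Measure (EuclideanSpace ℝ (Fin p))) [IsProbabilityMeasure P]
    (hP2 : Integrable (fun x => ‖x‖ ^ 2) P) :
    ∀ (W₀ : EuclideanSpace ℝ (Fin p)) (A₀ : Finset (EuclideanSpace ℝ (Fin p)))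
      (hA₀ : A₀.Nonempty),
      (∀ l, W₀ l ∈ Set.Icc (0 : ℝ) b) → A₀.card ≤ k → (∀ a ∈ A₀, ‖a‖ ≤ 5 * M) →
      ∀ ε : ℝ, 0 < ε → ∃ δ : ℝ, 0 < δ ∧
        ∀ (W : EuclideanSpace ℝ (Fin p)) (A : Finset (EuclideanSpace ℝ (Fin p)))
          (hA : A.Nonempty),
          (∀ l, W l ∈ Set.Icc (0 : ℝ) b) → A.card ≤ k → (∀ a ∈ A, ‖a‖ ≤ 5 * M) →
          ‖W - W₀‖ ^ 2
              + Metric.hausdorffDist (↑A : Set (EuclideanSpace ℝ (Fin p))) (↑A₀) < δ →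
          |(∫ x, lwkG p β lam W A hA x ∂P - α₀ * ∑ l, W l)
              - (∫ x, lwkG p β lam W₀ A₀ hA₀ x ∂P - α₀ * ∑ l, W₀ l)| < ε := by
  intro W₀ A₀ hA₀ hW₀ _ hR₀ ε hε
  set v : ℝ → ℝ := fun t => t ^ β + (lam / (p : ℝ) ^ 2) * |t| with hv
  have hvc : Continuous v := by fun_prop
  set C := v b with hC
  have hvnn : ∀ t, 0 ≤ t → 0 ≤ v t := fun t ht => by
    simp only [hv]
    positivity
  have hvC : ∀ t ∈ Set.Icc (0 : ℝ) b, v t ≤ C := by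
    rintro t ⟨h0, h1⟩
    simp only [hC, hv, abs_of_nonneg h0, abs_of_pos hb]
    gcongr
  have hC0 : 0 ≤ C := hvnn b hb.le
  set h : EuclideanSpace ℝ (Fin p) → ℝ := fun x => 1 + 2 * ‖x‖ ^ 2 + 2 * (5 * M) ^ 2 with hh
  have hhI : Integrable h P :=
    ((integrable_const 1).add (hP2.const_mul 2)).add (integrable_const _)
  set K := ∫ x, h x ∂P with hK
  have hK0 : 0 ≤ K := integral_nonneg fun x => by simp only [hh]; positivity
  -- `E` collects the part of the error that depends on the weights alone.
  set E : EuclideanSpace ℝ (Fin p) → ℝ := fun W =>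
    (∑ l, |v (W l) - v (W₀ l)|) * K + |α₀ * (∑ l, W l) - α₀ * ∑ l, W₀ l| with hE
  have hEc : Continuous E := by fun_prop
  obtain ⟨d, hd, hdE⟩ := Metric.continuous_iff.1 hEc W₀ (ε / 2) (half_pos hε)
  have hE0 : E W₀ = 0 := by simp [hE]
  -- The centres contribute at most `C p r K`; the `+ 1` avoids dividing by zero.
  set r := ε / (2 * (C * p * K + 1)) with hr
  have hr0 : 0 < r := by positivity
  have hrb : C * p * r * K < ε / 2 := by
    have hq : 0 < C * p * K + 1 := by positivity
    have e : r * (C * p * K + 1) = ε / 2 := by rw [hr]; field_simp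
    nlinarith
  refine ⟨min (d ^ 2) r, by positivity, fun W A hA hW _ hR hlt => ?_⟩
  have hn : 0 ≤ Metric.hausdorffDist (A : Set (EuclideanSpace ℝ (Fin p))) A₀ :=
    Metric.hausdorffDist_nonneg
  have hWd : dist W W₀ < d := by
    rw [dist_eq_norm]
    refine lt_of_pow_lt_pow_left₀ 2 hd.le ?_
    linarith [min_le_left (d ^ 2) r]
  have hHr : Metric.hausdorffDist (A : Set (EuclideanSpace ℝ (Fin p))) A₀ < r := by
    nlinarith [min_le_right (d ^ 2) r, sq_nonneg ‖W - W₀‖]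
  have htop : Metric.hausdorffEDist (A : Set (EuclideanSpace ℝ (Fin p))) A₀ ≠ ⊤ :=
    Metric.hausdorffEDist_ne_top_of_nonempty_of_bounded hA hA₀
      A.finite_toSet.isBounded A₀.finite_toSet.isBounded
  have hEW : E W < ε / 2 := by
    have := hdE W hWd
    rw [hE0, Real.dist_eq, sub_zero] at this
    exact (le_abs_self _).trans_lt this
  set D := ∑ l, |v (W l) - v (W₀ l)| + C * p * r with hD
  have hq : ∀ x, ∀ a ∈ A, ∀ a₀ ∈ A₀, dist a a₀ ≤ r →
      |∑ l, v (W l) * (x l - a l) ^ 2 - ∑ l, v (W₀ l) * (x l - a₀ l) ^ 2| ≤ D * h x :=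
    fun x a ha a₀ ha₀ hda => wq_sub_le _ _ C (5 * M) r (fun l => hvnn _ (hW₀ l).1)
      (fun l => hvC _ (hW₀ l)) x a a₀ (hR a ha) (hR₀ a₀ ha₀) hda
  have hpt : ∀ x, |lwkG p β lam W A hA x - lwkG p β lam W₀ A₀ hA₀ x| ≤ D * h x := by
    intro x
    refine abs_sub_le_iff.2 ⟨inf'_sub_le _ _ _ _ _ _ _ fun a₀ ha₀ => ?_,
      inf'_sub_le _ _ _ _ _ _ _ fun a ha => ?_⟩
    · obtain ⟨a, ha, hda⟩ := Metric.exists_dist_lt_of_hausdorffDist_lt' ha₀ hHr htop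
      exact ⟨a, ha, (abs_sub_le_iff.1 (hq x a ha a₀ ha₀ hda.le)).1⟩
    · obtain ⟨a₀, ha₀, hda⟩ := Metric.exists_dist_lt_of_hausdorffDist_lt ha hHr htop
      exact ⟨a₀, ha₀, (abs_sub_le_iff.1 (hq x a ha a₀ ha₀ hda.le)).2⟩
  have hint : |∫ x, lwkG p β lam W A hA x ∂P - ∫ x, lwkG p β lam W₀ A₀ hA₀ x ∂P| ≤ D * K := by
    rw [← integral_sub (lwkG_integrable p β lam hlam W (fun l => (hW l).1) A hA P hP2)
      (lwkG_integrable p β lam hlam W₀ (fun l => (hW₀ l).1) A₀ hA₀ P hP2), hK,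
      ← integral_const_mul]
    exact norm_integral_le_of_norm_le (hhI.const_mul D) (.of_forall fun x => (Real.norm_eq_abs _).trans_le (hpt x))
  rw [sub_sub_sub_comm]
  refine (abs_sub _ _).trans_lt ?_
  simp only [hE] at hEW
  nlinarith [hint]
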